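/- For every k ≥ 1, every k-tuple (r_1, …, r_k) of elements of ROQ(ℝ³) satisfies an L_{conv,≤}-formula φ(x_1, …, x_k) with the following property: for any two k-tuples (s_1, …, s_k) and (s'_1, …, s'_k) of elements of ROQ(ℝ³) satisfying φ in 𝔐³, there exists an affine transformation τ of ℝ³ with τ(s_i) = s'_i for all i = 1, …, k. -/

import Mathlib

open FirstOrder

/-- A rational open half-space in ℝ^n: `{x | c·x < d}` with `c ∈ ℚ^n` nonzero, `d ∈ ℚ`. -/
def IsRatHalfSpace (n : ℕ) (s : Set (Fin n → ℝ)) : Prop :=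
  ∃ (c : Fin n → ℚ) (d : ℚ), c ≠ 0 ∧
    s = {x : Fin n → ℝ | (∑ i, (c i : ℝ) * x i) < (d : ℝ)}

/-- Membership in the Boolean subalgebra `ROQ(ℝ^n)` of the Boolean algebra of regular open
sets generated by the rational open half-spaces, with Boolean operations
`a·b = a ∩ b`, `a + b = int(cl(a ∪ b))`, `-a = int(ℝ^n ∖ a)`, `0 = ∅`, `1 = univ`. -/
inductive InROQ (n : ℕ) : Set (Fin n → ℝ) → Prop
  | bot : InROQ n ∅
  | top : InROQ n Set.univ
  | halfspace (s : Set (Fin n → ℝ)) : IsRatHalfSpace n s → InROQ n s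
  | inf (s t : Set (Fin n → ℝ)) : InROQ n s → InROQ n t → InROQ n (s ∩ t)
  | sup (s t : Set (Fin n → ℝ)) : InROQ n s → InROQ n t →
      InROQ n (interior (closure (s ∪ t)))
  | compl (s : Set (Fin n → ℝ)) : InROQ n s → InROQ n (interior sᶜ)

/-- `ROQ(ℝ^n)` as a set of subsets of ℝ^n. -/
def ROQ (n : ℕ) : Set (Set (Fin n → ℝ)) := {s | InROQ n s}

/-- The domain of the structure 𝔐^n: the regular open rational polytopes. -/
def ROQel (n : ℕ) : Type := {s : Set (Fin n → ℝ) // InROQ n s}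

/-- Relation symbols of the language L_{conv,≤}: one unary (`conv`), one binary (`≤`). -/
def LconvRel : ℕ → Type
  | 1 => Unit
  | 2 => Unit
  | _ => Empty

/-- The first-order language L_{conv,≤} with no function symbols, a unary relation symbol
`conv` and a binary relation symbol `≤`. -/
def Lconv : Language := ⟨fun _ => Empty, LconvRel⟩

/-- The structure 𝔐^n: domain ROQ(ℝ^n), `≤` interpreted as inclusion and `conv`
as convexity. -/
instance MStructure (n : ℕ) : Lconv.Structure (ROQel n) where
  funMap := fun f _ => f.elim
  RelMap := fun {k} r v =>
    match k, r, v with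
    | 1, _, v => Convex ℝ (v 0).1
    | 2, _, v => (v 0).1 ⊆ (v 1).1
    | 0, r, _ => r.elim
    | (_ + 3), r, _ => r.elim

/-- An affine transformation of ℝ^n: x ↦ Ax + b with A an invertible n×n real matrix. -/
def IsAffineEquiv (n : ℕ) (f : (Fin n → ℝ) → (Fin n → ℝ)) : Prop :=
  ∃ (A : Matrix (Fin n) (Fin n) ℝ) (b : Fin n → ℝ),
    IsUnit A.det ∧ ∀ x, f x = A.mulVec x + b

/-!
The half-spaces `{xᵢ < 0}` and `{xᵢ < 1}` encode an affine coordinate system, and being an affine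
image of this frame is a first-order property: half-spaces are the regions that, together with
their complements, are convex and nonempty, and the functionals defining `n` of them have linearly
independent linear parts once all `2ⁿ` sign patterns occur. A formula asserting the existence of
such a frame therefore fixes a tuple up to one affine transformation, provided that every region is
definable from the frame.

By Farkas' lemma, a half-space `{q > 0}` with `{f > 0} ∧ {g > 0} ≤ {q > 0} ≤ {f > 0} ∨ {g > 0}` in
the Boolean algebra has `q = a f + b g` with `a, b ≥ 0`. Either the same condition for `f + t` and
`g - t`, or parallelism to a known `{f + g + c > 0}`, forces `a = b`, so `{f + g > 0}` is definable
from known half-spaces. When `n ≥ 2`, such additions, together with rescaling, generate all rational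
functionals from the frame.
-/

section Definability

variable {L : Language} {M α β : Type*} [L.Structure M]

/-- A relation on tuples of elements of `M` that is first-order definable in the language `L`
without parameters. -/
def IsDefinableRel (L : Language) {M α : Type*} [L.Structure M] (R : (α → M) → Prop) : Prop :=
  (∅ : Set M).Definable L {v | R v}

namespace IsDefinableRel

theorem exists_formula {R : (α → M) → Prop} (h : IsDefinableRel L R) :
    ∃ φ : L.Formula α, ∀ v, φ.Realize v ↔ R v := by
  obtain ⟨φ, hφ⟩ := Set.empty_definable_iff.1 h
  exact ⟨φ, fun v => (Set.ext_iff.1 hφ v).symm⟩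

theorem of_formula (φ : L.Formula α) : IsDefinableRel (M := M) L φ.Realize :=
  Set.empty_definable_iff.2 ⟨φ, rfl⟩

theorem not {R : (α → M) → Prop} (h : IsDefinableRel L R) : IsDefinableRel L fun v => ¬ R v :=
  Set.Definable.compl h

theorem and {R S : (α → M) → Prop} (hR : IsDefinableRel L R) (hS : IsDefinableRel L S) :
    IsDefinableRel L fun v => R v ∧ S v :=
  Set.Definable.inter hR hS

theorem or {R S : (α → M) → Prop} (hR : IsDefinableRel L R) (hS : IsDefinableRel L S) :
    IsDefinableRel L fun v => R v ∨ S v :=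
  Set.Definable.union hR hS

theorem imp {R S : (α → M) → Prop} (hR : IsDefinableRel L R) (hS : IsDefinableRel L S) :
    IsDefinableRel L fun v => R v → S v := by
  simpa only [imp_iff_not_or] using hR.not.or hS

theorem iff {R S : (α → M) → Prop} (hR : IsDefinableRel L R) (hS : IsDefinableRel L S) :
    IsDefinableRel L fun v => R v ↔ S v := by
  simpa only [iff_iff_implies_and_implies] using (hR.imp hS).and (hS.imp hR)

theorem comp {R : (α → M) → Prop} (h : IsDefinableRel L R) (f : α → β) :
    IsDefinableRel L fun v : β → M => R fun a => v (f a) :=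
  Set.Definable.preimage_comp f h

theorem forall_of_finite {ι : Type*} [Finite ι] {R : ι → (α → M) → Prop}
    (h : ∀ i, IsDefinableRel L (R i)) : IsDefinableRel L fun v => ∀ i, R i v := by
  simpa only [IsDefinableRel, ← Set.ofPred_forall] using Set.definable_iInter_of_finite h

theorem exists_tuple [Finite β] {R : (α → M) → (β → M) → Prop}
    (h : IsDefinableRel L fun v : α ⊕ β → M => R (fun a => v (.inl a)) fun b => v (.inr b)) :
    IsDefinableRel L fun v => ∃ w, R v w :=
  Set.Definable.exists_of_finite (β := β) h

theorem exists_elem {R : (α → M) → M → Prop}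
    (h : IsDefinableRel L fun v : Option α → M => R (fun a => v (some a)) (v none)) :
    IsDefinableRel L fun v => ∃ x, R v x := by
  have hR := exists_tuple (β := Unit) (R := fun v w => R v (w ()))
    (h.comp fun o : Option α => o.elim (Sum.inr ()) Sum.inl)
  have hiff : ∀ v, (∃ w : Unit → M, R v (w ())) ↔ ∃ x, R v x := fun v =>
    ⟨fun ⟨w, hw⟩ => ⟨w (), hw⟩, fun ⟨x, hx⟩ => ⟨fun _ => x, hx⟩⟩
  simpa only [hiff] using hR

theorem forall_elem {R : (α → M) → M → Prop}
    (h : IsDefinableRel L fun v : Option α → M => R (fun a => v (some a)) (v none)) :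
    IsDefinableRel L fun v => ∀ x, R v x := by
  simpa only [not_exists, not_not] using (exists_elem (R := fun v x => ¬ R v x) h.not).not

end IsDefinableRel

end Definability

section LinearFunctionals

variable {K V ι : Type*} [Field K] [AddCommGroup V] [Module K V]

theorem surjective_pi_of_linearIndependent [Finite ι] {φ : ι → V →ₗ[K] K}
    (hφ : LinearIndependent K φ) : Function.Surjective (LinearMap.pi φ) := by
  have hcoe : LinearIndependent K fun i => (φ i : V → K) :=
    hφ.map' (LinearMap.ltoFun K V K K) (LinearMap.ker_eq_bot.2 DFunLike.coe_injective)
  rw [← LinearMap.range_eq_top, ← span_flip_eq_top_iff_linearIndependent.2 hcoe]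
  exact (Submodule.span_eq (LinearMap.range (LinearMap.pi φ))).symm

theorem exists_eq_sum_smul_of_nonneg [LinearOrder K] [IsStrictOrderedRing K] [Fintype ι]
    {φ : ι → V →ₗ[K] K} (hφ : LinearIndependent K φ) {ψ : V →ₗ[K] K}
    (hψ : ∀ v, (∀ i, 0 ≤ φ i v) → 0 ≤ ψ v) : ∃ c : ι → K, 0 ≤ c ∧ ψ = ∑ i, c i • φ i := by
  classical
  have hker : ⨅ i, LinearMap.ker (φ i) ≤ LinearMap.ker ψ := by
    intro v hv
    have hv : ∀ i, φ i v = 0 := by simpa using hv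
    have hneg : 0 ≤ ψ (-v) := hψ _ fun i => by simp [hv i]
    exact le_antisymm (by simpa using hneg) (hψ v fun i => (hv i).ge)
  obtain ⟨c, rfl⟩ :=
    (Submodule.mem_span_range_iff_exists_fun K).1 (mem_span_of_iInf_ker_le_ker hker)
  refine ⟨c, fun i => ?_, rfl⟩
  obtain ⟨v, hv⟩ := surjective_pi_of_linearIndependent hφ (Pi.single i 1)
  have hv : ∀ j, φ j v = (Pi.single i 1 : ι → K) j := fun j => congrFun hv j
  simpa [hv, Pi.single_apply] using
    hψ v fun j => (hv j).symm ▸ (Pi.single_nonneg.2 zero_le_one : (0 : ι → K) ≤ _) j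

variable {P : Type*} [AddTorsor V P]

theorem surjective_of_linear_ne_zero {f : P →ᵃ[K] K} (hf : f.linear ≠ 0) :
    Function.Surjective f :=
  (AffineMap.linear_surjective_iff f).1 (LinearMap.surjective hf)

theorem surjective_affine_pi_of_linearIndependent [Finite ι] {f : ι → P →ᵃ[K] K}
    (hf : LinearIndependent K fun i => (f i).linear) : Function.Surjective (AffineMap.pi f) :=
  (AffineMap.linear_surjective_iff _).1 (surjective_pi_of_linearIndependent hf)

theorem exists_forall_eq_sum_mul [LinearOrder K] [IsStrictOrderedRing K] [Fintype ι]
    {f : ι → P →ᵃ[K] K} (hf : LinearIndependent K fun i => (f i).linear) {q : P →ᵃ[K] K}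
    (hpos : ∀ x, (∀ i, 0 ≤ f i x) → 0 ≤ q x) (hneg : ∀ x, (∀ i, f i x ≤ 0) → q x ≤ 0) :
    ∃ c : ι → K, 0 ≤ c ∧ ∀ x, q x = ∑ i, c i * f i x := by
  obtain ⟨o, ho⟩ := surjective_affine_pi_of_linearIndependent hf 0
  have ho : ∀ i, f i o = 0 := fun i => congrFun ho i
  have hqo : q o = 0 := le_antisymm (hneg o fun i => (ho i).le) (hpos o fun i => (ho i).ge)
  have hlin : ∀ {g : P →ᵃ[K] K}, g o = 0 → ∀ v, g (v +ᵥ o) = g.linear v := fun hg v => by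
    rw [AffineMap.map_vadd, hg, vadd_eq_add, add_zero]
  obtain ⟨c, hc, hq⟩ := exists_eq_sum_smul_of_nonneg hf (ψ := q.linear) fun v hv => by
    rw [← hlin hqo]
    exact hpos _ fun i => (hlin (ho i) v).symm ▸ hv i
  refine ⟨c, hc, fun x => ?_⟩
  rw [← vsub_vadd x o, hlin hqo, hq]
  simp [ho]

end LinearFunctionals

section HalfSpaces

variable {V : Type*} [AddCommGroup V] [Module ℝ V]

/-- The open half-space (degenerate if `f` is constant) on which the affine functional `f` is
positive. -/
def posSet (f : V →ᵃ[ℝ] ℝ) : Set V := {x | 0 < f x}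

theorem mem_posSet {f : V →ᵃ[ℝ] ℝ} {x : V} : x ∈ posSet f ↔ 0 < f x := Iff.rfl

theorem convex_posSet (f : V →ᵃ[ℝ] ℝ) : Convex ℝ (posSet f) :=
  (convex_Ioi 0).affine_preimage f

theorem posSet_smul (f : V →ᵃ[ℝ] ℝ) {c : ℝ} (hc : 0 < c) : posSet (c • f) = posSet f := by
  ext x
  simp [mem_posSet, hc]

theorem posSet_smul_add_smul_self {f g : V →ᵃ[ℝ] ℝ} {a : ℝ} (ha : 0 ≤ a)
    (h : (a • f + a • g).linear ≠ 0) : posSet (a • f + a • g) = posSet (f + g) := by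
  have ha0 : a ≠ 0 := by
    rintro rfl
    simp at h
  rw [← smul_add, posSet_smul _ (ha.lt_of_ne' ha0)]

theorem posSet_nonempty {f : V →ᵃ[ℝ] ℝ} (hf : f.linear ≠ 0) : (posSet f).Nonempty := by
  obtain ⟨x, hx⟩ := surjective_of_linear_ne_zero hf 1
  exact ⟨x, by simp [mem_posSet, hx]⟩

theorem exists_pos_linear_eq_smul {f q : V →ᵃ[ℝ] ℝ} (hf : f.linear ≠ 0) (hq : q.linear ≠ 0)
    (hfq : posSet f ⊆ posSet q) : ∃ c : ℝ, 0 < c ∧ q.linear = c • f.linear := by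
  obtain ⟨x, hx⟩ := posSet_nonempty hf
  have hmono : ∀ v, 0 ≤ f.linear v → 0 ≤ q.linear v := by
    intro v hv
    by_contra! hneg
    set t := q x / -q.linear v with ht
    have ht_nonneg : 0 ≤ t := div_nonneg (hfq hx).le (neg_pos.2 hneg).le
    have hmem : t • v +ᵥ x ∈ posSet f := by
      rw [mem_posSet, AffineMap.map_vadd, map_smul]
      exact add_pos_of_nonneg_of_pos (mul_nonneg ht_nonneg hv) hx
    have hpos : 0 < q (t • v +ᵥ x) := hfq hmem
    rw [AffineMap.map_vadd, map_smul, smul_eq_mul, vadd_eq_add, ht, div_neg, neg_mul,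
      div_mul_cancel₀ _ hneg.ne, neg_add_cancel] at hpos
    exact hpos.false
  obtain ⟨c, hc, hqc⟩ := exists_eq_sum_smul_of_nonneg (φ := fun _ : Unit => f.linear)
    (linearIndependent_unique_iff.2 hf) (ψ := q.linear) fun v hv => hmono v (hv ())
  have hqc : q.linear = c () • f.linear := by simpa using hqc
  refine ⟨c (), (hc ()).lt_of_ne' fun h0 : c () = 0 => hq ?_, hqc⟩
  rw [hqc, h0, zero_smul]

/-- Open half-spaces of `V`: the positive sets of the nonconstant affine functionals. -/
def IsOpenHalfSpace (h : Set V) : Prop :=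
  ∃ f : V →ᵃ[ℝ] ℝ, f.linear ≠ 0 ∧ h = posSet f

theorem IsOpenHalfSpace.preimage {h : Set V} (hh : IsOpenHalfSpace h) (σ : V ≃ᵃ[ℝ] V) :
    IsOpenHalfSpace (σ ⁻¹' h) := by
  obtain ⟨f, hf, rfl⟩ := hh
  refine ⟨f.comp σ, fun h0 => hf ?_, rfl⟩
  ext v
  simpa using LinearMap.congr_fun h0 (σ.linear.symm v)

end HalfSpaces

section HalfSpaceTopology

variable {V ι : Type*} [NormedAddCommGroup V] [NormedSpace ℝ V]

theorem isOpenMap_of_surjective {W : Type*} [NormedAddCommGroup W] [NormedSpace ℝ W]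
    [FiniteDimensional ℝ W] {F : V →ᵃ[ℝ] W} (hF : Function.Surjective F) : IsOpenMap F :=
  AffineMap.isOpenMap_linear_iff.1 <|
    F.linear.isOpenMap_of_finiteDimensional ((AffineMap.linear_surjective_iff F).2 hF)

variable [FiniteDimensional ℝ V]

theorem isOpen_posSet (f : V →ᵃ[ℝ] ℝ) : IsOpen (posSet f) :=
  isOpen_lt continuous_const f.continuous_of_finiteDimensional

theorem closure_posSet {f : V →ᵃ[ℝ] ℝ} (hf : f.linear ≠ 0) :
    closure (posSet f) = (posSet (-f))ᶜ := by
  have h := (isOpenMap_of_surjective (surjective_of_linear_ne_zero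
    hf)).preimage_closure_eq_closure_preimage f.continuous_of_finiteDimensional (Set.Ioi 0)
  rw [closure_Ioi] at h
  refine h.symm.trans ?_
  ext x
  simp [mem_posSet]

theorem interior_compl_posSet {f : V →ᵃ[ℝ] ℝ} (hf : f.linear ≠ 0) :
    interior (posSet f)ᶜ = posSet (-f) := by
  rw [interior_compl, closure_posSet hf, compl_compl]

theorem interior_closure_posSet {f : V →ᵃ[ℝ] ℝ} (hf : f.linear ≠ 0) :
    interior (closure (posSet f)) = posSet f := by
  rw [closure_posSet hf, interior_compl_posSet (by simpa using hf), neg_neg]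

theorem nonneg_of_forall_pos_imp_nonneg [Finite ι] {f : ι → V →ᵃ[ℝ] ℝ}
    (hf : LinearIndependent ℝ fun i => (f i).linear) {q : V →ᵃ[ℝ] ℝ}
    (hq : ∀ x, (∀ i, 0 < f i x) → 0 ≤ q x) {x : V} (hx : ∀ i, 0 ≤ f i x) : 0 ≤ q x := by
  have := Fintype.ofFinite ι
  have hclosure := (isOpenMap_of_surjective (surjective_affine_pi_of_linearIndependent
    hf)).preimage_closure_eq_closure_preimage (AffineMap.pi f).continuous_of_finiteDimensional
    (Set.univ.pi fun _ => Set.Ioi 0)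
  simp only [closure_pi_set, closure_Ioi] at hclosure
  have hmem : x ∈ AffineMap.pi f ⁻¹' Set.univ.pi fun _ => Set.Ici 0 := fun i _ => hx i
  rw [hclosure] at hmem
  exact closure_minimal (t := {y | 0 ≤ q y})
    (fun y (hy : ∀ i ∈ Set.univ, 0 < f i y) => hq y fun i => hy i trivial)
    (isClosed_le continuous_const q.continuous_of_finiteDimensional) hmem

theorem isOpenHalfSpace_iff_convex_compl {s : Set V} (hs : interior (closure s) = s) :
    IsOpenHalfSpace s ↔
      Convex ℝ s ∧ Convex ℝ (interior sᶜ) ∧ s.Nonempty ∧ (interior sᶜ).Nonempty := by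
  constructor
  · rintro ⟨f, hf, rfl⟩
    rw [interior_compl_posSet hf]
    exact ⟨convex_posSet f, convex_posSet (-f), posSet_nonempty hf,
      posSet_nonempty (by simpa using hf)⟩
  · rintro ⟨hconv, hconv', ⟨a, ha⟩, b, hb⟩
    obtain ⟨φ, u, hφs, hφs'⟩ := geometric_hahn_banach_open_open hconv (hs ▸ isOpen_interior)
      hconv' isOpen_interior (disjoint_compl_right.mono_right interior_subset)
    let f : V →ᵃ[ℝ] ℝ := AffineMap.const ℝ V u - φ.toLinearMap.toAffineMap
    have hf_apply : ∀ x, f x = u - φ x := fun x => rfl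
    refine ⟨f, ?_, subset_antisymm (fun x hx => ?_) ?_⟩
    · intro h0
      have hφ : φ.toLinearMap = 0 := by simpa [f] using h0
      have hφ_zero : ∀ x, φ x = 0 := LinearMap.congr_fun hφ
      linarith [hφs a ha, hφs' b hb, hφ_zero a, hφ_zero b]
    · rw [mem_posSet, hf_apply]
      linarith [hφs x hx]
    · rw [← hs]
      refine interior_maximal (fun x hx => ?_) (isOpen_posSet f)
      by_contra hn
      have hx' : x ∈ interior sᶜ := by rwa [interior_compl]
      rw [mem_posSet, hf_apply] at hx
      linarith [hφs' x hx']

/-- `h` lies between `a` and `b` in the lattice of regular open sets: `a ∧ b ≤ h ≤ a ∨ b`. -/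
def Between (a b h : Set V) : Prop :=
  a ∩ b ⊆ h ∧ h ⊆ interior (closure (a ∪ b))

theorem between_posSet_add (f g : V →ᵃ[ℝ] ℝ) :
    Between (posSet f) (posSet g) (posSet (f + g)) := by
  refine ⟨fun x ⟨hf, hg⟩ => add_pos (mem_posSet.1 hf) hg, fun x hx => ?_⟩
  refine ((isOpen_posSet f).union (isOpen_posSet g)).subset_interior_closure ?_
  by_contra hn
  simp only [Set.mem_union, mem_posSet, not_or, not_lt] at hn
  exact (add_nonpos hn.1 hn.2).not_gt hx

theorem Between.exists_eq_smul_add_smul {f g q : V →ᵃ[ℝ] ℝ}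
    (hfg : LinearIndependent ℝ ![f.linear, g.linear])
    (h : Between (posSet f) (posSet g) (posSet q)) :
    ∃ a b : ℝ, 0 ≤ a ∧ 0 ≤ b ∧ q = a • f + b • g := by
  have hli : LinearIndependent ℝ fun i => (![f, g] i).linear := by
    convert hfg with i
    fin_cases i <;> rfl
  have hli_neg : LinearIndependent ℝ fun i => (![-f, -g] i).linear := by
    convert! hli.units_smul fun _ => -1 with i
    fin_cases i <;> simp
  have hpos : ∀ x, (∀ i, 0 < ![f, g] i x) → 0 ≤ q x := fun x hx =>
    le_of_lt (h.1 (Fin.forall_fin_two.1 hx))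
  have hneg : ∀ x, (∀ i, 0 < ![-f, -g] i x) → 0 ≤ (-q) x := by
    intro x hx
    obtain ⟨hfx, hgx⟩ : x ∈ posSet (-f) ∧ x ∈ posSet (-g) := Fin.forall_fin_two.1 hx
    by_contra! hq
    have hx' : x ∈ closure (posSet f ∪ posSet g) :=
      interior_subset (h.2 (neg_neg_iff_pos.1 hq))
    rw [closure_union, closure_posSet (hfg.ne_zero 0), closure_posSet (hfg.ne_zero 1)]
      at hx'
    exact hx'.elim (fun hn => hn hfx) fun hn => hn hgx
  obtain ⟨c, hc, hq⟩ := exists_forall_eq_sum_mul hli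
    (fun x hx => nonneg_of_forall_pos_imp_nonneg hli hpos hx)
    (fun x hx => neg_nonneg.1 <| nonneg_of_forall_pos_imp_nonneg hli_neg hneg <|
      Fin.forall_fin_two.2 ⟨neg_nonneg.2 (hx 0), neg_nonneg.2 (hx 1)⟩)
  refine ⟨c 0, c 1, hc 0, hc 1, AffineMap.ext fun x => ?_⟩
  simp [hq, Fin.sum_univ_two]

theorem eq_posSet_add_of_between_of_between {f g : V →ᵃ[ℝ] ℝ}
    (hfg : LinearIndependent ℝ ![f.linear, g.linear]) {t : ℝ} (ht : t ≠ 0) {h : Set V}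
    (hh : IsOpenHalfSpace h) (hb : Between (posSet f) (posSet g) h)
    (hb' : Between (posSet (f + AffineMap.const ℝ V t)) (posSet (g - AffineMap.const ℝ V t)) h) :
    h = posSet (f + g) := by
  obtain ⟨q, hq, rfl⟩ := hh
  obtain ⟨a, b, ha, -, rfl⟩ := hb.exists_eq_smul_add_smul hfg
  obtain ⟨a', b', -, -, hq'⟩ := hb'.exists_eq_smul_add_smul (by simpa using hfg)
  obtain ⟨rfl, rfl⟩ : a = a' ∧ b = b' := by
    refine hfg.eq_of_pair ?_
    simpa using congrArg AffineMap.linear hq'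
  obtain rfl : a = b := by
    have hconst : a * f 0 + b * g 0 = a * (f 0 + t) + b * (g 0 - t) :=
      congrArg (fun k : V →ᵃ[ℝ] ℝ => k 0) hq'
    exact mul_right_cancel₀ ht (by linarith)
  exact posSet_smul_add_smul_self ha hq

theorem eq_posSet_add_of_between_of_parallel {f g q : V →ᵃ[ℝ] ℝ}
    (hfg : LinearIndependent ℝ ![f.linear, g.linear]) (hq : q.linear = f.linear + g.linear)
    {h : Set V} (hh : IsOpenHalfSpace h) (hb : Between (posSet f) (posSet g) h)
    (hcmp : h ⊆ posSet q ∨ posSet q ⊆ h) : h = posSet (f + g) := by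
  obtain ⟨p, hp, rfl⟩ := hh
  obtain ⟨a, b, ha, -, rfl⟩ := hb.exists_eq_smul_add_smul hfg
  have hq0 : q.linear ≠ 0 := fun h0 => one_ne_zero
    (LinearIndependent.pair_iff.1 hfg 1 1 (by rw [one_smul, one_smul, ← hq, h0])).1
  obtain ⟨c, hc⟩ : ∃ c : ℝ, (a • f + b • g).linear = c • q.linear := by
    rcases hcmp with hcmp | hcmp
    · obtain ⟨c, hc, hqc⟩ := exists_pos_linear_eq_smul hp hq0 hcmp
      exact ⟨c⁻¹, by rw [hqc, inv_smul_smul₀ hc.ne']⟩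
    · obtain ⟨c, -, hqc⟩ := exists_pos_linear_eq_smul hq0 hp hcmp
      exact ⟨c, hqc⟩
  obtain ⟨rfl, rfl⟩ : a = c ∧ b = c := hfg.eq_of_pair (by simpa [hq] using hc)
  exact posSet_smul_add_smul_self ha hp

section AffineEquiv

variable (σ : V ≃ᵃ[ℝ] V)

theorem preimage_interior_affineEquiv (s : Set V) : σ ⁻¹' interior s = interior (σ ⁻¹' s) :=
  σ.toContinuousAffineEquiv.toHomeomorph.preimage_interior s

theorem preimage_closure_affineEquiv (s : Set V) : σ ⁻¹' closure s = closure (σ ⁻¹' s) :=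
  σ.toContinuousAffineEquiv.toHomeomorph.preimage_closure s

theorem Between.preimage {a b h : Set V} (hb : Between a b h) :
    Between (σ ⁻¹' a) (σ ⁻¹' b) (σ ⁻¹' h) := by
  refine ⟨Set.preimage_mono (f := σ) hb.1, ?_⟩
  rw [← Set.preimage_union, ← preimage_closure_affineEquiv, ← preimage_interior_affineEquiv]
  exact Set.preimage_mono hb.2

end AffineEquiv

end HalfSpaceTopology

section RationalHalfSpaces

variable {n : ℕ}

/-- The affine functional `x ↦ d - c·x` attached to `w = (c, d)`; its positive set is the half-space
of `IsRatHalfSpace`. -/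
noncomputable def ratFunctional (n : ℕ) :
    (Fin n → ℚ) × ℚ →ₗ[ℚ] (Fin n → ℝ) →ᵃ[ℝ] ℝ where
  toFun w := AffineMap.const ℝ _ (w.2 : ℝ) -
    (∑ i, (w.1 i : ℝ) • LinearMap.proj i : (Fin n → ℝ) →ₗ[ℝ] ℝ).toAffineMap
  map_add' w w' := by
    ext x
    simp only [Prod.fst_add, Prod.snd_add, Pi.add_apply, Rat.cast_add, add_smul,
      Finset.sum_add_distrib, AffineMap.coe_sub, AffineMap.coe_add, AffineMap.coe_const,
      LinearMap.coe_toAffineMap, LinearMap.add_apply, Pi.sub_apply, Function.const_apply]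
    ring
  map_smul' q w := by
    ext x
    simp [Rat.smul_def, mul_sub, Finset.mul_sum, mul_assoc]

theorem ratFunctional_apply (w : (Fin n → ℚ) × ℚ) (x : Fin n → ℝ) :
    ratFunctional n w x = w.2 - ∑ i, (w.1 i : ℝ) * x i := by
  simp [ratFunctional]

theorem ratFunctional_single_apply (i : Fin n) (c d : ℚ) (x : Fin n → ℝ) :
    ratFunctional n (Pi.single i c, d) x = d - c * x i := by
  rw [ratFunctional_apply, Finset.sum_eq_single i (fun j _ hj => by simp [hj]) (by simp)]
  simp

theorem linear_ratFunctional_single (w : (Fin n → ℚ) × ℚ) (i : Fin n) :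
    (ratFunctional n w).linear (Pi.single i 1) = -w.1 i := by
  simp [ratFunctional, Pi.single_apply]

theorem ratFunctional_zero_left (d : ℚ) :
    ratFunctional n (0, d) = AffineMap.const ℝ _ (d : ℝ) := by
  ext x
  simp [ratFunctional_apply]

theorem linear_ratFunctional_ne_zero {w : (Fin n → ℚ) × ℚ} (hw : w.1 ≠ 0) :
    (ratFunctional n w).linear ≠ 0 := by
  intro h0
  refine hw (funext fun i => ?_)
  simpa [h0] using linear_ratFunctional_single w i

theorem linearIndependent_ratFunctional {w w' : (Fin n → ℚ) × ℚ} {i j : Fin n}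
    (h : w.1 i * w'.1 j ≠ w.1 j * w'.1 i) :
    LinearIndependent ℝ ![(ratFunctional n w).linear, (ratFunctional n w').linear] := by
  rw [LinearIndependent.pair_iff]
  intro s t hst
  have hcoord : ∀ k, s * w.1 k + t * w'.1 k = 0 := fun k => by
    have hk := LinearMap.congr_fun hst (Pi.single k 1)
    simp only [LinearMap.add_apply, LinearMap.smul_apply, linear_ratFunctional_single,
      smul_eq_mul, LinearMap.zero_apply] at hk
    linarith
  have hdet : (w.1 i * w'.1 j - w.1 j * w'.1 i : ℝ) ≠ 0 := by
    exact_mod_cast sub_ne_zero.2 h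
  constructor <;> refine (mul_eq_zero.1 ?_).resolve_right hdet
  · linear_combination (w'.1 j : ℝ) * hcoord i - (w'.1 i : ℝ) * hcoord j
  · linear_combination (w.1 i : ℝ) * hcoord j - (w.1 j : ℝ) * hcoord i

theorem isRatHalfSpace_iff {s : Set (Fin n → ℝ)} :
    IsRatHalfSpace n s ↔ ∃ w, w.1 ≠ 0 ∧ s = posSet (ratFunctional n w) := by
  simp [IsRatHalfSpace, posSet, ratFunctional_apply]

namespace InROQ

variable {s : Set (Fin n → ℝ)}

theorem isOpen (h : InROQ n s) : IsOpen s := by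
  induction h with
  | bot => exact isOpen_empty
  | top => exact isOpen_univ
  | halfspace s hs =>
    obtain ⟨w, -, rfl⟩ := isRatHalfSpace_iff.1 hs
    exact isOpen_posSet _
  | inf s t _ _ hs ht => exact hs.inter ht
  | sup | compl => exact isOpen_interior

theorem interior_closure (h : InROQ n s) : interior (closure s) = s := by
  induction h with
  | bot => simp
  | top => simp
  | halfspace s hs =>
    obtain ⟨w, hw, rfl⟩ := isRatHalfSpace_iff.1 hs
    exact interior_closure_posSet (linear_ratFunctional_ne_zero hw)
  | inf s t hs ht ihs iht =>
    refine subset_antisymm ?_ (hs.isOpen.inter ht.isOpen).subset_interior_closure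
    calc interior (closure (s ∩ t))
      _ ⊆ interior (closure s ∩ closure t) := interior_mono (closure_inter_subset_inter_closure s t)
      _ = s ∩ t := by rw [interior_inter, ihs, iht]
  | sup s t _ _ _ _ => exact interior_closure_idem
  | compl s hs _ =>
    simpa only [hs.isOpen.isClosed_compl.closure_eq] using interior_closure_idem (s := sᶜ)

theorem iInter {ι : Type*} [Finite ι] {t : ι → Set (Fin n → ℝ)} (h : ∀ i, InROQ n (t i)) :
    InROQ n (⋂ i, t i) := by
  have := Fintype.ofFinite ι
  rw [← Set.iInf_eq_iInter, ← Finset.inf_univ_eq_iInf]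
  exact Finset.inf_induction .top (fun _ hs _ ht => .inf _ _ hs ht) fun i _ => h i

theorem posSet_ratFunctional {w : (Fin n → ℚ) × ℚ} (hw : w.1 ≠ 0) :
    InROQ n (posSet (ratFunctional n w)) :=
  .halfspace _ (isRatHalfSpace_iff.2 ⟨w, hw, rfl⟩)

end InROQ

end RationalHalfSpaces

section DefinableRelations

variable {n : ℕ} {α : Type*}

theorem isDefinableRel_subset (i j : α) :
    IsDefinableRel Lconv fun v : α → ROQel n => (v i).1 ⊆ (v j).1 := by
  convert IsDefinableRel.of_formula ((show Lconv.Relations 2 from ()).formula₂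
    (Language.Term.var i) (Language.Term.var j)) using 2 with v
  rw [Language.Formula.realize_rel₂]
  rfl

theorem isDefinableRel_convex (i : α) :
    IsDefinableRel Lconv fun v : α → ROQel n => Convex ℝ (v i).1 := by
  convert IsDefinableRel.of_formula ((show Lconv.Relations 1 from ()).formula₁
    (Language.Term.var i)) using 2 with v
  rw [Language.Formula.realize_rel₁]
  rfl

theorem isDefinableRel_eq_empty (i : α) :
    IsDefinableRel Lconv fun v : α → ROQel n => (v i).1 = ∅ := by
  have hiff : ∀ v : α → ROQel n, (v i).1 = ∅ ↔ ∀ x : ROQel n, (v i).1 ⊆ x.1 := fun v =>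
    ⟨fun h x => h ▸ Set.empty_subset _, fun h => Set.subset_empty_iff.1 (h ⟨∅, .bot⟩)⟩
  simp only [hiff]
  exact .forall_elem (isDefinableRel_subset (some i) none)

theorem isDefinableRel_eq_inter (i j k : α) :
    IsDefinableRel Lconv fun v : α → ROQel n => (v k).1 = (v i).1 ∩ (v j).1 := by
  have hiff : ∀ v : α → ROQel n, (v k).1 = (v i).1 ∩ (v j).1 ↔
      ∀ x : ROQel n, x.1 ⊆ (v k).1 ↔ x.1 ⊆ (v i).1 ∧ x.1 ⊆ (v j).1 := fun v => by
    refine ⟨fun h x => h ▸ Set.subset_inter_iff, fun h => subset_antisymm ?_ ?_⟩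
    · exact Set.subset_inter_iff.2 ((h (v k)).1 subset_rfl)
    · exact (h ⟨_, (v i).2.inf _ _ (v j).2⟩).2 ⟨Set.inter_subset_left, Set.inter_subset_right⟩
  simp only [hiff]
  exact .forall_elem <| (isDefinableRel_subset none (some k)).iff <|
    (isDefinableRel_subset none (some i)).and (isDefinableRel_subset none (some j))

theorem isDefinableRel_disjoint (i j : α) :
    IsDefinableRel Lconv fun v : α → ROQel n => Disjoint (v i).1 (v j).1 := by
  have hiff : ∀ v : α → ROQel n, Disjoint (v i).1 (v j).1 ↔
      ∃ x : ROQel n, x.1 = (v i).1 ∩ (v j).1 ∧ x.1 = ∅ := fun v => by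
    rw [Set.disjoint_iff_inter_eq_empty]
    exact ⟨fun h => ⟨⟨∅, .bot⟩, h.symm, rfl⟩, fun ⟨_, hx, hx'⟩ => hx ▸ hx'⟩
  simp only [hiff]
  exact .exists_elem <| (isDefinableRel_eq_inter (some i) (some j) none).and
    (isDefinableRel_eq_empty none)

theorem isDefinableRel_subset_interior_compl (i j : α) :
    IsDefinableRel Lconv fun v : α → ROQel n => (v i).1 ⊆ interior (v j).1ᶜ := by
  have hiff : ∀ v : α → ROQel n, (v i).1 ⊆ interior (v j).1ᶜ ↔ Disjoint (v i).1 (v j).1 :=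
    fun v => by rw [(v i).2.isOpen.subset_interior_iff, Set.subset_compl_iff_disjoint_right]
  simpa only [hiff] using isDefinableRel_disjoint i j

theorem isDefinableRel_eq_interior_compl (i j : α) :
    IsDefinableRel Lconv fun v : α → ROQel n => (v j).1 = interior (v i).1ᶜ := by
  have hiff : ∀ v : α → ROQel n, (v j).1 = interior (v i).1ᶜ ↔
      ∀ x : ROQel n, x.1 ⊆ (v j).1 ↔ x.1 ⊆ interior (v i).1ᶜ := fun v =>
    ⟨fun h x => h ▸ Iff.rfl, fun h => subset_antisymm ((h (v j)).1 subset_rfl)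
      ((h ⟨_, (v i).2.compl⟩).2 subset_rfl)⟩
  simp only [hiff]
  exact .forall_elem <| (isDefinableRel_subset none (some j)).iff <|
    isDefinableRel_subset_interior_compl none (some i)

theorem isDefinableRel_isOpenHalfSpace (i : α) :
    IsDefinableRel Lconv fun v : α → ROQel n => IsOpenHalfSpace (v i).1 := by
  have hiff : ∀ v : α → ROQel n, IsOpenHalfSpace (v i).1 ↔
      ∃ x : ROQel n, x.1 = interior (v i).1ᶜ ∧
        Convex ℝ (v i).1 ∧ Convex ℝ x.1 ∧ ¬ (v i).1 = ∅ ∧ ¬ x.1 = ∅ := fun v => by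
    rw [isOpenHalfSpace_iff_convex_compl (v i).2.interior_closure]
    simp only [Set.nonempty_iff_ne_empty]
    exact ⟨fun h => ⟨⟨_, (v i).2.compl⟩, rfl, h⟩, fun ⟨_, hx, h⟩ => hx ▸ h⟩
  simp only [hiff]
  exact .exists_elem <| (isDefinableRel_eq_interior_compl (some i) none).and <|
    (isDefinableRel_convex _).and <| (isDefinableRel_convex _).and <|
    (isDefinableRel_eq_empty _).not.and (isDefinableRel_eq_empty _).not

theorem isDefinableRel_between (i j k : α) :
    IsDefinableRel Lconv fun v : α → ROQel n => Between (v i).1 (v j).1 (v k).1 := by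
  have hiff : ∀ v : α → ROQel n, Between (v i).1 (v j).1 (v k).1 ↔
      (∀ x : ROQel n, x.1 ⊆ (v i).1 ∧ x.1 ⊆ (v j).1 → x.1 ⊆ (v k).1) ∧
        ∀ x : ROQel n, (v i).1 ⊆ x.1 ∧ (v j).1 ⊆ x.1 → (v k).1 ⊆ x.1 := fun v => by
    refine and_congr ⟨fun h x hx => (Set.subset_inter hx.1 hx.2).trans h, fun h => ?_⟩
      ⟨fun h x hx => ?_, fun h => ?_⟩
    · exact h ⟨_, (v i).2.inf _ _ (v j).2⟩ ⟨Set.inter_subset_left, Set.inter_subset_right⟩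
    · rw [← x.2.interior_closure]
      exact h.trans (interior_mono (closure_mono (Set.union_subset hx.1 hx.2)))
    · have hopen := (v i).2.isOpen.union (v j).2.isOpen
      exact h ⟨_, (v i).2.sup _ _ (v j).2⟩
        (Set.union_subset_iff.1 hopen.subset_interior_closure)
  simp only [hiff]
  exact .and
    (.forall_elem <| ((isDefinableRel_subset none (some i)).and
      (isDefinableRel_subset none (some j))).imp (isDefinableRel_subset none (some k)))
    (.forall_elem <| ((isDefinableRel_subset (some i) none).and
      (isDefinableRel_subset (some j) none)).imp (isDefinableRel_subset (some k) none))

end DefinableRelations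

section Frames

variable {V ι : Type*} [AddCommGroup V] [Module ℝ V]

theorem linearIndependent_of_forall_orthant_nonempty [Finite ι] {f : ι → V →ᵃ[ℝ] ℝ}
    (h : ∀ ε : ι → Bool, (⋂ i, if ε i then posSet (f i) else posSet (-f i)).Nonempty) :
    LinearIndependent ℝ fun i => (f i).linear := by
  have := Fintype.ofFinite ι
  refine Fintype.linearIndependent_iff.2 fun g hg => ?_
  obtain ⟨x, hx⟩ := h fun i => decide (0 < g i)
  obtain ⟨y, hy⟩ := h fun i => decide (g i < 0)
  rw [Set.mem_iInter] at hx hy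
  have hpos : ∀ i, g i ≠ 0 → 0 < g i * (f i).linear (x - y) := by
    intro i hi
    have hxi := hx i
    have hyi := hy i
    rw [← vsub_eq_sub, AffineMap.linearMap_vsub, vsub_eq_sub]
    rcases hi.lt_or_gt with hi | hi <;>
      simp only [hi, hi.not_gt, decide_true, decide_false, Bool.false_eq_true, if_true, if_false,
        mem_posSet, AffineMap.coe_neg, Pi.neg_apply] at hxi hyi
    · exact mul_pos_of_neg_of_neg hi (by linarith)
    · exact mul_pos hi (by linarith)
  have hnonneg : ∀ i, 0 ≤ g i * (f i).linear (x - y) := fun i => by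
    by_cases hi : g i = 0
    · simp [hi]
    · exact (hpos i hi).le
  have hsum : ∑ i, g i * (f i).linear (x - y) = 0 := by
    simpa using LinearMap.congr_fun hg (x - y)
  intro i
  by_contra hi
  exact (hpos i hi).ne' <| (Finset.sum_eq_zero_iff_of_nonneg fun i _ => hnonneg i).1 hsum i
    (Finset.mem_univ i)

theorem exists_eq_posSet_of_ssubset {h h' : Set V} (hh : IsOpenHalfSpace h)
    (hh' : IsOpenHalfSpace h') (hlt : h ⊂ h') : ∃ f : V →ᵃ[ℝ] ℝ,
      f.linear ≠ 0 ∧ h = posSet f ∧ h' = posSet (f + AffineMap.const ℝ V 1) := by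
  obtain ⟨f, hf, rfl⟩ := hh
  obtain ⟨q, hq, rfl⟩ := hh'
  obtain ⟨c, hc, hqc⟩ := exists_pos_linear_eq_smul hf hq hlt.1
  obtain ⟨t, rfl⟩ : ∃ t, q = c • (f + AffineMap.const ℝ V t) := by
    refine ⟨c⁻¹ * q 0 - f 0, (AffineMap.ext_linear_iff).2 ⟨?_, 0, ?_⟩⟩
    · simpa using hqc
    · simp [mul_sub, hc.ne']
  rw [posSet_smul _ hc] at hlt ⊢
  have ht : 0 < t := by
    by_contra! ht
    exact hlt.2 fun x hx => lt_of_lt_of_le (mem_posSet.1 hx) (add_le_of_nonpos_right ht)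
  refine ⟨t⁻¹ • f, by simpa [ht.ne'] using hf, (posSet_smul f (inv_pos.2 ht)).symm, ?_⟩
  rw [← posSet_smul (f + _) (inv_pos.2 ht), smul_add]
  congr 2
  ext x
  simp [ht.ne']

variable {n : ℕ}

/-- The half-spaces `{x | xᵢ < 0}` and `{x | xᵢ < 1}`: an affine coordinate system encoded by
elements of `ROQ(ℝⁿ)`. -/
noncomputable def coordFrame (n : ℕ) (j : Fin n × Fin 2) : Set (Fin n → ℝ) :=
  posSet (ratFunctional n (Pi.single j.1 1, (j.2 : ℕ)))

/-- The properties of `coordFrame n`, expressible in `L_{conv,≤}`, that characterise it up to affine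
equivalence: `n` pairs of parallel half-spaces whose bounding hyperplanes are in general position,
as witnessed by the `2ⁿ` nonempty orthants. -/
structure IsFrame (F : Fin n × Fin 2 → Set (Fin n → ℝ)) : Prop where
  isOpenHalfSpace (j) : IsOpenHalfSpace (F j)
  ssubset (i) : F (i, 0) ⊂ F (i, 1)
  nonempty_orthant (ε : Fin n → Bool) :
    (⋂ i, if ε i then F (i, 0) else interior (F (i, 0))ᶜ).Nonempty

theorem mem_coordFrame {j : Fin n × Fin 2} {x : Fin n → ℝ} :
    x ∈ coordFrame n j ↔ x j.1 < (j.2 : ℕ) := by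
  simp [coordFrame, mem_posSet, ratFunctional_single_apply]

theorem inROQ_coordFrame (j : Fin n × Fin 2) : InROQ n (coordFrame n j) :=
  .posSet_ratFunctional (by simp)

theorem isFrame_coordFrame (n : ℕ) : IsFrame (coordFrame n) where
  isOpenHalfSpace _ := ⟨_, linear_ratFunctional_ne_zero (by simp), rfl⟩
  ssubset i := by
    refine ⟨fun x hx => ?_, fun h => ?_⟩
    · rw [mem_coordFrame] at hx ⊢
      exact hx.trans (by simp)
    · have hmem : (0 : Fin n → ℝ) ∈ coordFrame n (i, 0) := h (mem_coordFrame.2 (by simp))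
      simp [mem_coordFrame] at hmem
  nonempty_orthant ε := by
    refine ⟨fun i => if ε i then -1 else 1, Set.mem_iInter.2 fun i => ?_⟩
    rw [coordFrame, interior_compl_posSet (linear_ratFunctional_ne_zero (by simp))]
    cases hε : ε i <;> simp [hε, mem_posSet, ratFunctional_single_apply]

theorem IsFrame.exists_affineEquiv {F : Fin n × Fin 2 → Set (Fin n → ℝ)} (hF : IsFrame F) :
    ∃ σ : (Fin n → ℝ) ≃ᵃ[ℝ] (Fin n → ℝ), ∀ j, F j = σ ⁻¹' coordFrame n j := by
  choose f hf hf0 hf1 using fun i =>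
    exists_eq_posSet_of_ssubset (hF.isOpenHalfSpace _) (hF.isOpenHalfSpace _) (hF.ssubset i)
  have hli : LinearIndependent ℝ fun i => (f i).linear :=
    linearIndependent_of_forall_orthant_nonempty fun ε => by
      simpa only [hf0, interior_compl_posSet (hf _)] using hF.nonempty_orthant ε
  have hsurj := surjective_affine_pi_of_linearIndependent (f := fun i => -f i) <| by
    convert! hli.units_smul fun _ => -1 with i
    simp
  have hinj := (AffineMap.linear_injective_iff _).1 <|
    LinearMap.injective_iff_surjective.2 ((AffineMap.linear_surjective_iff _).2 hsurj)
  refine ⟨.ofBijective ⟨hinj, hsurj⟩, fun ⟨i, k⟩ => Set.ext fun x => ?_⟩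
  rw [Set.mem_preimage, mem_coordFrame]
  change x ∈ F (i, k) ↔ -f i x < (k : ℕ)
  fin_cases k
  · simp [hf0, mem_posSet]
  · simp [hf1, mem_posSet, neg_lt_iff_pos_add']

theorem isDefinableRel_isFrame {α : Type*} (a : Fin n × Fin 2 → α) :
    IsDefinableRel Lconv fun v : α → ROQel n => IsFrame fun j => (v (a j)).1 := by
  have hiff : ∀ v : α → ROQel n, (IsFrame fun j => (v (a j)).1) ↔
      (∀ j, IsOpenHalfSpace (v (a j)).1) ∧
      (∀ i, (v (a (i, 0))).1 ⊆ (v (a (i, 1))).1 ∧ ¬ (v (a (i, 1))).1 ⊆ (v (a (i, 0))).1) ∧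
      ∀ ε : Fin n → Bool, ∃ x : ROQel n, ¬ x.1 = ∅ ∧
        ∀ i, x.1 ⊆ if ε i then (v (a (i, 0))).1 else interior (v (a (i, 0))).1ᶜ := fun v => by
    have horthant : ∀ ε : Fin n → Bool,
        InROQ n (⋂ i, if ε i then (v (a (i, 0))).1 else interior (v (a (i, 0))).1ᶜ) :=
      fun ε => .iInter fun i => by
        split_ifs
        exacts [(v _).2, (v _).2.compl]
    refine ⟨fun h => ⟨h.1, h.2, fun ε => ⟨⟨_, horthant ε⟩, (h.3 ε).ne_empty, ?_⟩⟩,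
      fun h => ⟨h.1, h.2.1, fun ε => ?_⟩⟩
    · exact fun i => Set.iInter_subset _ i
    · obtain ⟨x, hx, hsub⟩ := h.2.2 ε
      exact (Set.nonempty_iff_ne_empty.2 hx).mono (Set.subset_iInter hsub)
  simp only [hiff]
  refine .and (.forall_of_finite fun j => isDefinableRel_isOpenHalfSpace _) <|
    .and (.forall_of_finite fun i =>
      (isDefinableRel_subset _ _).and (isDefinableRel_subset _ _).not)
      (.forall_of_finite fun ε => .exists_elem <| (isDefinableRel_eq_empty _).not.and <|
        .forall_of_finite fun i => ?_)
  cases ε i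
  · simpa using isDefinableRel_subset_interior_compl none (some (a (i, 0)))
  · simpa using isDefinableRel_subset none (some (a (i, 0)))

end Frames

section FrameDefinability

variable {n : ℕ}

/-- Definability of `p` from the coordinate frame, compatibly with affine transformations: some
definable relation holds between the frame and `p`, and relates an affine image of the frame to the
corresponding image of `p` only. Images are written as preimages under the inverse transformation.
As these may lie outside `ROQ(ℝⁿ)`, only uniqueness is required of them. -/
def IsFrameDefinable (p : Set (Fin n → ℝ)) : Prop :=
  ∃ (hp : InROQ n p) (R : (Fin n × Fin 2 → ROQel n) → ROQel n → Prop),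
    IsDefinableRel Lconv (fun v : Option (Fin n × Fin 2) → ROQel n =>
      R (fun j => v (some j)) (v none)) ∧
    R (fun j => ⟨coordFrame n j, inROQ_coordFrame j⟩) ⟨p, hp⟩ ∧
    ∀ (σ : (Fin n → ℝ) ≃ᵃ[ℝ] (Fin n → ℝ)) (F : Fin n × Fin 2 → ROQel n) (h : ROQel n),
      (∀ j, (F j).1 = σ ⁻¹' coordFrame n j) → R F h → h.1 = σ ⁻¹' p

theorem isFrameDefinable_coordFrame (j : Fin n × Fin 2) : IsFrameDefinable (coordFrame n j) := by
  refine ⟨inROQ_coordFrame j, fun F h => h.1 = (F j).1, ?_, rfl, fun σ F h hF hh => hh ▸ hF j⟩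
  simp only [Set.Subset.antisymm_iff]
  exact (isDefinableRel_subset none (some j)).and (isDefinableRel_subset (some j) none)

namespace IsFrameDefinable

theorem of_unique {ι : Type*} [Finite ι] {q : ι → Set (Fin n → ℝ)} {p : Set (Fin n → ℝ)}
    (S : (ι → Set (Fin n → ℝ)) → Set (Fin n → ℝ) → Prop) (hq : ∀ i, IsFrameDefinable (q i))
    (hp : InROQ n p)
    (hdef : IsDefinableRel Lconv fun v : Option ι → ROQel n =>
      S (fun i => (v (some i)).1) (v none).1)
    (hpreimage : ∀ (σ : (Fin n → ℝ) ≃ᵃ[ℝ] (Fin n → ℝ)) w h, S w h →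
      S (fun i => σ ⁻¹' w i) (σ ⁻¹' h))
    (hSp : S q p) (hunique : ∀ h, S q h → h = p) : IsFrameDefinable p := by
  choose hqmem R hRdef hRq hR using hq
  refine ⟨hp, fun F h => ∃ w : ι → ROQel n, (∀ i, R i F (w i)) ∧ S (fun i => (w i).1) h.1,
    .exists_tuple <| .and (.forall_of_finite fun i => ?_) ?_,
    ⟨fun i => ⟨q i, hqmem i⟩, hRq, hSp⟩, fun σ F h hF ⟨w, hw, hS⟩ => ?_⟩
  · exact (hRdef i).comp fun o => o.elim (Sum.inr i) fun j => Sum.inl (some j)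
  · exact hdef.comp fun o => o.elim (Sum.inl none) Sum.inr
  · have hwq : (fun i => σ.symm ⁻¹' (w i).1) = q := funext fun i => by
      rw [hR i σ F (w i) hF (hw i)]
      exact σ.toEquiv.symm_preimage_preimage (q i)
    rw [← hunique _ (hwq ▸ hpreimage σ.symm _ _ hS)]
    exact (σ.toEquiv.preimage_symm_preimage h.1).symm

theorem empty : IsFrameDefinable (∅ : Set (Fin n → ℝ)) :=
  .of_unique (q := Empty.elim) (fun _ h => h = ∅) (fun i => i.elim) .bot
    (isDefinableRel_eq_empty none) (fun _ _ _ h => by rw [h, Set.preimage_empty]) rfl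
    fun _ h => h

theorem inter {p q : Set (Fin n → ℝ)} (hp : IsFrameDefinable p) (hq : IsFrameDefinable q) :
    IsFrameDefinable (p ∩ q) :=
  .of_unique (q := ![p, q]) (fun w h => h = w 0 ∩ w 1) (Fin.forall_fin_two.2 ⟨hp, hq⟩)
    (hp.1.inf _ _ hq.1) (isDefinableRel_eq_inter _ _ _)
    (fun _ _ _ h => by rw [h, Set.preimage_inter]) rfl fun _ h => h

theorem interior_compl {p : Set (Fin n → ℝ)} (hp : IsFrameDefinable p) :
    IsFrameDefinable (interior pᶜ) :=
  .of_unique (q := fun _ : Unit => p) (fun w h => h = interior (w ())ᶜ) (fun _ => hp) hp.1.compl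
    (isDefinableRel_eq_interior_compl _ _)
    (fun σ _ _ h => by rw [h, preimage_interior_affineEquiv, Set.preimage_compl]) rfl fun _ h => h

end IsFrameDefinable

/-- The half-space on which `x ↦ d - c·x` is positive, where `w = (c, d)` and `c ≠ 0`, is definable
from the coordinate frame. -/
def IsDefinableFunctional (w : (Fin n → ℚ) × ℚ) : Prop :=
  w.1 ≠ 0 ∧ IsFrameDefinable (posSet (ratFunctional n w))

theorem fst_add_ne_zero_of_minor_ne {w w' : (Fin n → ℚ) × ℚ} {i j : Fin n}
    (hminor : w.1 i * w'.1 j ≠ w.1 j * w'.1 i) : (w + w').1 ≠ 0 := by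
  intro h0
  have hw' : ∀ k, w'.1 k = -w.1 k := fun k => eq_neg_of_add_eq_zero_right (congrFun h0 k)
  exact hminor (by rw [hw', hw']; ring)

namespace IsDefinableFunctional

variable {w w' : (Fin n → ℚ) × ℚ}

theorem neg (hw : IsDefinableFunctional w) : IsDefinableFunctional (-w) := by
  refine ⟨neg_ne_zero.2 hw.1, ?_⟩
  rw [map_neg, ← interior_compl_posSet (linear_ratFunctional_ne_zero hw.1)]
  exact hw.2.interior_compl

theorem smul_of_pos (hw : IsDefinableFunctional w) {c : ℚ} (hc : 0 < c) :
    IsDefinableFunctional (c • w) := by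
  refine ⟨smul_ne_zero hc.ne' hw.1, ?_⟩
  rw [map_smul, ← Rat.cast_smul_eq_qsmul ℝ, posSet_smul _ (by exact_mod_cast hc)]
  exact hw.2

theorem smul (hw : IsDefinableFunctional w) {c : ℚ} (hc : c ≠ 0) :
    IsDefinableFunctional (c • w) := by
  rcases hc.lt_or_gt with hc | hc
  · simpa using (hw.smul_of_pos (neg_pos.2 hc)).neg
  · exact hw.smul_of_pos hc

theorem add_of_shift (hw : IsDefinableFunctional w) (hw' : IsDefinableFunctional w') {i j : Fin n}
    (hminor : w.1 i * w'.1 j ≠ w.1 j * w'.1 i) {t : ℚ} (ht : t ≠ 0)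
    (hwt : IsDefinableFunctional (w + (0, t))) (hwt' : IsDefinableFunctional (w' - (0, t))) :
    IsDefinableFunctional (w + w') := by
  have hne := fst_add_ne_zero_of_minor_ne hminor
  let S (s : Fin 4 → Set (Fin n → ℝ)) (h : Set (Fin n → ℝ)) : Prop :=
    IsOpenHalfSpace h ∧ Between (s 0) (s 1) h ∧ Between (s 2) (s 3) h
  let q : Fin 4 → Set (Fin n → ℝ) := ![posSet (ratFunctional n w), posSet (ratFunctional n w'),
    posSet (ratFunctional n (w + (0, t))), posSet (ratFunctional n (w' - (0, t)))]
  have hSp : S q (posSet (ratFunctional n (w + w'))) := by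
    refine ⟨⟨_, linear_ratFunctional_ne_zero hne, rfl⟩, ?_, ?_⟩
    · rw [map_add]
      exact between_posSet_add _ _
    · rw [← add_add_sub_cancel w w' (0, t), map_add]
      exact between_posSet_add _ _
  have hunique : ∀ h, S q h → h = posSet (ratFunctional n (w + w')) := by
    rintro h ⟨hh, hb, hb'⟩
    rw [map_add]
    refine eq_posSet_add_of_between_of_between (linearIndependent_ratFunctional hminor)
      (Rat.cast_ne_zero.2 ht) hh hb ?_
    rw [← ratFunctional_zero_left, ← map_add, ← map_sub]
    exact hb'
  have hq : ∀ k, IsFrameDefinable (q k) := fun k => by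
    fin_cases k
    exacts [hw.2, hw'.2, hwt.2, hwt'.2]
  exact ⟨hne, .of_unique S hq (.posSet_ratFunctional hne)
    ((isDefinableRel_isOpenHalfSpace _).and <|
      (isDefinableRel_between _ _ _).and (isDefinableRel_between _ _ _))
    (fun σ _ _ h => ⟨h.1.preimage σ, h.2.1.preimage σ, h.2.2.preimage σ⟩) hSp hunique⟩

theorem add_of_parallel (hw : IsDefinableFunctional w) (hw' : IsDefinableFunctional w')
    {i j : Fin n} (hminor : w.1 i * w'.1 j ≠ w.1 j * w'.1 i) {c : ℚ}
    (hc : IsDefinableFunctional (w + w' + (0, c))) : IsDefinableFunctional (w + w') := by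
  have hne := fst_add_ne_zero_of_minor_ne hminor
  let S (s : Fin 3 → Set (Fin n → ℝ)) (h : Set (Fin n → ℝ)) : Prop :=
    IsOpenHalfSpace h ∧ Between (s 0) (s 1) h ∧ (h ⊆ s 2 ∨ s 2 ⊆ h)
  let q : Fin 3 → Set (Fin n → ℝ) := ![posSet (ratFunctional n w), posSet (ratFunctional n w'),
    posSet (ratFunctional n (w + w' + (0, c)))]
  have hadd : ratFunctional n (w + w' + (0, c)) =
      ratFunctional n w + ratFunctional n w' + AffineMap.const ℝ _ (c : ℝ) := by
    rw [map_add, map_add, ratFunctional_zero_left]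
  have hcmp : posSet (ratFunctional n (w + w')) ⊆ posSet (ratFunctional n (w + w' + (0, c))) ∨
      posSet (ratFunctional n (w + w' + (0, c))) ⊆ posSet (ratFunctional n (w + w')) := by
    rw [hadd, map_add]
    rcases le_total 0 (c : ℝ) with hc | hc
    · exact .inl fun x hx => add_pos_of_pos_of_nonneg hx hc
    · exact .inr fun x hx => (mem_posSet.1 hx).trans_le (add_le_of_nonpos_right hc)
  have hSp : S q (posSet (ratFunctional n (w + w'))) :=
    ⟨⟨_, linear_ratFunctional_ne_zero hne, rfl⟩,
      map_add (ratFunctional n) w w' ▸ between_posSet_add _ _, hcmp⟩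
  have hunique : ∀ h, S q h → h = posSet (ratFunctional n (w + w')) := by
    rintro h ⟨hh, hb, hcmp⟩
    rw [map_add]
    exact eq_posSet_add_of_between_of_parallel (linearIndependent_ratFunctional hminor)
      (by simp [hadd]) hh hb hcmp
  have hq : ∀ k, IsFrameDefinable (q k) := fun k => by
    fin_cases k
    exacts [hw.2, hw'.2, hc.2]
  exact ⟨hne, .of_unique S hq (.posSet_ratFunctional hne)
    ((isDefinableRel_isOpenHalfSpace _).and <| (isDefinableRel_between _ _ _).and <|
      (isDefinableRel_subset _ _).or (isDefinableRel_subset _ _))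
    (fun σ _ _ h => ⟨h.1.preimage σ, h.2.1.preimage σ,
      h.2.2.imp (Set.preimage_mono (f := σ)) (Set.preimage_mono (f := σ))⟩) hSp hunique⟩

end IsDefinableFunctional

end FrameDefinability

section CoordinateArithmetic

variable {n : ℕ}

namespace IsDefinableFunctional

theorem single_zero (i : Fin n) : IsDefinableFunctional (Pi.single i 1, 0) :=
  ⟨by simp, by simpa [coordFrame] using isFrameDefinable_coordFrame (i, 0)⟩

theorem single_one (i : Fin n) : IsDefinableFunctional (Pi.single i 1, 1) :=
  ⟨by simp, by simpa [coordFrame] using isFrameDefinable_coordFrame (i, 1)⟩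

theorem single_sub_single {i j : Fin n} (hij : i ≠ j) :
    IsDefinableFunctional (Pi.single i 1 - Pi.single j 1, 0) := by
  simpa [sub_eq_add_neg] using (single_zero i).add_of_shift (single_zero j).neg (i := i) (j := j)
    (t := 1) (by simp [hij, hij.symm]) one_ne_zero (by simpa using single_one i)
    (by simpa using (single_one j).neg)

theorem single_of_single {i : Fin n} {a : ℚ} (ha : IsDefinableFunctional (Pi.single i 1, a))
    (j : Fin n) : IsDefinableFunctional (Pi.single j 1, a) := by
  obtain rfl | hij := eq_or_ne i j
  · exact ha
  · simpa using (single_sub_single hij.symm).add_of_parallel ha (i := i) (j := j) (c := -a)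
      (by simp [hij, hij.symm]) (by simpa using single_zero j)

theorem single_sub_single_of_single {i j : Fin n} (hij : i ≠ j) {a : ℚ}
    (ha : IsDefinableFunctional (Pi.single i 1, a)) :
    IsDefinableFunctional (Pi.single i 1 - Pi.single j 1, a) := by
  simpa [sub_eq_add_neg] using ha.add_of_parallel (single_zero j).neg (i := i) (j := j) (c := -a)
    (by simp [hij, hij.symm]) (by simpa [sub_eq_add_neg] using single_sub_single hij)

variable [Nontrivial (Fin n)]

theorem single_add {i : Fin n} {a b : ℚ} (ha : IsDefinableFunctional (Pi.single i 1, a))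
    (hb : IsDefinableFunctional (Pi.single i 1, b)) :
    IsDefinableFunctional (Pi.single i 1, a + b) := by
  obtain ⟨j, hij⟩ := exists_ne i
  simpa using (single_sub_single_of_single hij.symm ha).add_of_parallel (hb.single_of_single j)
    (i := i) (j := j) (c := -(a + b)) (by simp [hij, hij.symm]) (by simpa using single_zero i)

theorem single_neg {i : Fin n} {a : ℚ} (ha : IsDefinableFunctional (Pi.single i 1, a)) :
    IsDefinableFunctional (Pi.single i 1, -a) := by
  obtain ⟨j, hij⟩ := exists_ne i
  have hji : IsDefinableFunctional (Pi.single i 1 - Pi.single j 1, -a) := by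
    simpa using (single_sub_single_of_single hij (ha.single_of_single j)).neg
  simpa using hji.add_of_parallel (single_zero j)
    (i := i) (j := j) (c := a) (by simp [hij, hij.symm]) (by simpa using single_zero i)

theorem single_int (i : Fin n) (m : ℤ) : IsDefinableFunctional (Pi.single i 1, (m : ℚ)) := by
  induction m with
  | zero => simpa using single_zero i
  | succ m hm => simpa using hm.single_add (single_one i)
  | pred m hm => simpa [sub_eq_add_neg] using hm.single_add (single_one i).single_neg

theorem smul_single_sub_single {i j : Fin n} (hij : i ≠ j) {m : ℤ} (hm : (m : ℚ) ≠ 0) :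
    IsDefinableFunctional ((m : ℚ) • Pi.single i 1 - Pi.single j 1, 0) := by
  simpa [sub_eq_add_neg] using ((single_zero i).smul hm).add_of_shift (single_zero j).neg
    (i := i) (j := j) (t := m) (by simp [hij, hij.symm, hm]) hm
    (by simpa using (single_one i).smul hm) (by simpa using (single_int j m).neg)

theorem single_rat (i : Fin n) (q : ℚ) : IsDefinableFunctional (Pi.single i 1, q) := by
  obtain ⟨j, hij⟩ := exists_ne i
  have hden : ((q.den : ℤ) : ℚ) ≠ 0 := by simp
  have hnum : IsDefinableFunctional (((q.den : ℤ) : ℚ) • Pi.single i 1, (q.num : ℚ)) := by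
    simpa using (smul_single_sub_single hij.symm hden).add_of_parallel (single_int j q.num)
      (i := i) (j := j) (c := -q.num) (by simp [hij, hij.symm])
      (by simpa using (single_zero i).smul hden)
  have hq : ((q.den : ℤ) : ℚ)⁻¹ * q.num = q := by
    rw [Int.cast_natCast, inv_mul_eq_div, Rat.num_div_den]
  simpa only [Prod.smul_mk, inv_smul_smul₀ hden, smul_eq_mul, hq] using
    hnum.smul (inv_ne_zero hden)

theorem single {i : Fin n} {c : ℚ} (hc : c ≠ 0) (d : ℚ) :
    IsDefinableFunctional (Pi.single i c, d) := by
  simpa only [Prod.smul_mk, ← Pi.single_smul, smul_eq_mul, mul_one, mul_inv_cancel_left₀ hc] using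
    (single_rat i (c⁻¹ * d)).smul hc

theorem of_ne_zero {w : (Fin n → ℚ) × ℚ} (hw : w.1 ≠ 0) : IsDefinableFunctional w := by
  suffices h : ∀ c : Fin n →₀ ℚ, c ≠ 0 → ∀ d, IsDefinableFunctional (⇑c, d) by
    simpa using h (Finsupp.equivFunOnFinite.symm w.1)
      (by simpa [DFunLike.ext_iff, funext_iff] using hw) w.2
  intro c
  induction c using Finsupp.induction with
  | zero => exact fun h0 => absurd rfl h0
  | single_add i a c hi ha ih =>
    intro _ d
    rw [Finsupp.coe_add, Finsupp.single_eq_pi_single]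
    by_cases hc : c = 0
    · simpa [hc] using single ha d
    · obtain ⟨j, hj⟩ := Finsupp.ne_iff.1 hc
      have hci : c i = 0 := Finsupp.notMem_support_iff.1 hi
      simpa using (single ha 0).add_of_shift (ih hc d) (i := i) (j := j) (t := 1)
        (by simpa [hci, ha] using hj) one_ne_zero (by simpa using single ha 1)
        (by simpa using ih hc (d - 1))

end IsDefinableFunctional

theorem InROQ.isFrameDefinable [Nontrivial (Fin n)] {p : Set (Fin n → ℝ)} (hp : InROQ n p) :
    IsFrameDefinable p := by
  induction hp with
  | bot => exact .empty
  | top => simpa using (IsFrameDefinable.empty (n := n)).interior_compl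
  | halfspace s hs =>
    obtain ⟨w, hw, rfl⟩ := isRatHalfSpace_iff.1 hs
    exact (IsDefinableFunctional.of_ne_zero hw).2
  | inf s t _ _ hs ht => exact hs.inter ht
  | sup s t _ _ hs ht =>
    have hsup : interior (closure (s ∪ t)) = interior (interior sᶜ ∩ interior tᶜ)ᶜ := by
      rw [closure_eq_compl_interior_compl, Set.compl_union, interior_inter]
    exact hsup ▸ (hs.interior_compl.inter ht.interior_compl).interior_compl
  | compl s _ hs => exact hs.interior_compl

end CoordinateArithmetic

theorem isAffineEquiv_of_affineEquiv {n : ℕ} (τ : (Fin n → ℝ) ≃ᵃ[ℝ] (Fin n → ℝ)) :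
    IsAffineEquiv n τ := by
  refine ⟨LinearMap.toMatrix' τ.linear.toLinearMap, τ 0, ?_, fun x => ?_⟩
  · rw [LinearMap.det_toMatrix']
    exact LinearEquiv.isUnit_det' _
  · rw [LinearMap.toMatrix'_mulVec]
    simpa using τ.map_vadd 0 x

theorem affine_complete_formula_tuples_dim3_general {n : ℕ} (hn : 2 ≤ n) {ι : Type*} [Finite ι]
    (r : ι → ROQel n) :
    ∃ φ : Lconv.Formula ι, φ.Realize r ∧
      ∀ s s' : ι → ROQel n, φ.Realize s → φ.Realize s' →
        ∃ τ : (Fin n → ℝ) → (Fin n → ℝ), IsAffineEquiv n τ ∧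
          ∀ i, τ '' (s i).1 = (s' i).1 := by
  have : Nontrivial (Fin n) := Fin.nontrivial_iff_two_le.2 hn
  choose _ R hdef hr himage using fun i => (r i).2.isFrameDefinable
  obtain ⟨φ, hφ⟩ := (IsDefinableRel.exists_tuple (L := Lconv)
    (R := fun (v : ι → ROQel n) (F : Fin n × Fin 2 → ROQel n) =>
      IsFrame (fun j => (F j).1) ∧ ∀ i, R i F (v i)) <|
    (isDefinableRel_isFrame _).and <| .forall_of_finite fun i =>
      (hdef i).comp fun o => o.elim (Sum.inl i) Sum.inr).exists_formula
  refine ⟨φ, (hφ r).2 ⟨_, isFrame_coordFrame n, hr⟩, fun s s' hs hs' => ?_⟩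
  obtain ⟨F, hF, hR⟩ := (hφ s).1 hs
  obtain ⟨F', hF', hR'⟩ := (hφ s').1 hs'
  obtain ⟨σ, hσ⟩ := hF.exists_affineEquiv
  obtain ⟨σ', hσ'⟩ := hF'.exists_affineEquiv
  refine ⟨σ.trans σ'.symm, isAffineEquiv_of_affineEquiv _, fun i => ?_⟩
  rw [himage i σ F _ hσ (hR i), himage i σ' F' _ hσ' (hR' i),
    AffineEquiv.coe_trans, Set.image_comp, Set.image_preimage_eq _ σ.surjective]
  exact σ'.symm.toEquiv.image_eq_preimage_symm _

/-- Every k-tuple of regions of ROQ(ℝ^3) satisfies an affine-complete formula in 𝔐^3: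
any two k-tuples satisfying it are related by a single affine transformation of ℝ^3. -/
theorem affine_complete_formula_tuples_dim3 (k : ℕ) (hk : 1 ≤ k)
    (r : Fin k → ROQel 3) :
    ∃ φ : Lconv.Formula (Fin k),
      φ.Realize r ∧
      ∀ s s' : Fin k → ROQel 3, φ.Realize s → φ.Realize s' →
        ∃ τ : (Fin 3 → ℝ) → (Fin 3 → ℝ), IsAffineEquiv 3 τ ∧
          ∀ i, τ '' (s i).1 = (s' i).1 :=
  affine_complete_formula_tuples_dim3_general (by norm_num) r
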